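/- arXiv:1606.04850 — 2 statements merged into one kernel-verified Lean document; each statement's English description precedes it below -/
import Mathlib

section
/- The series ∑_{n=1}^∞ ζ(2n+1)/((2n+1)(2n+3)·4^n) equals -2·log A + 1/4 - γ/3 + (2/3)·log 2, where A is the Glaisher-Kinkelin constant and γ is the Euler-Mascheroni constant. -/
open Real

/- For `Re s > 1` and `|x| < 1`, Taylor expansion of the Hurwitz zeta function gives
`∑ₙ (s)ₙ / n! * ζ(s + n) * xⁿ = ∑ₖ (k + 1 - x)⁻ˢ`, and at `x = ±1/2` the right-hand side is
elementary in terms of `2ˢ` and `ζ(s)`. The even part at `s` and the odd part at `s - 1` both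
involve only the values `ζ(s + 2j)`; their sum at `x = 1/2` reads
`∑ⱼ cⱼ(s) * ζ(s + 2j) = (2ˢ - 1) * ζ(s) - 2ˢ / 4` for `Re s > 2`. Once the terms `j = 0, 1` are
moved to the right, both sides continue to `Re s > -2`. At `s = -1` every `cⱼ` with `j ≥ 2` has a
simple zero, and its derivative there is, up to a constant factor, the coefficient of `ζ(2j - 1)`
in the required series, so differentiating at `s = -1` sums the series. The constant `γ` enters
through the term `j = 1`, whose zeta factor has its pole at `s = -1`. -/

open Filter Topology

section Multichoose

variable {R : Type*} [CommRing R] [BinomialRing R]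

lemma factorial_mul_multichoose (a : R) (n : ℕ) :
    (n.factorial : R) * Ring.multichoose a n = (ascPochhammer R n).eval a := by
  rw [← nsmul_eq_mul, Ring.factorial_nsmul_multichoose_eq_ascPochhammer,
    Polynomial.ascPochhammer_smeval_eq_eval]

lemma succ_mul_multichoose_succ_right (a : R) (n : ℕ) :
    (n + 1) * Ring.multichoose a (n + 1) = (a + n) * Ring.multichoose a n := by
  have := BinomialRing.toIsAddTorsionFree (R := R)
  refine nsmul_right_injective n.factorial_ne_zero ?_
  have h₁ := factorial_mul_multichoose a (n + 1)
  rw [ascPochhammer_succ_eval, ← factorial_mul_multichoose, Nat.factorial_succ] at h₁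
  push_cast at h₁
  simp only [nsmul_eq_mul]
  linear_combination h₁

lemma succ_mul_multichoose_succ_left (a : R) (n : ℕ) :
    (n + 1) * Ring.multichoose a (n + 1) = a * Ring.multichoose (a + 1) n := by
  have := BinomialRing.toIsAddTorsionFree (R := R)
  refine nsmul_right_injective n.factorial_ne_zero ?_
  have h₁ := factorial_mul_multichoose a (n + 1)
  rw [ascPochhammer_succ_left, Polynomial.eval_mul, Polynomial.eval_X, Polynomial.eval_comp,
    Polynomial.eval_add, Polynomial.eval_X, Polynomial.eval_one, ← factorial_mul_multichoose,
    Nat.factorial_succ] at h₁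
  push_cast at h₁
  simp only [nsmul_eq_mul]
  linear_combination h₁

end Multichoose

lemma differentiable_multichoose (n : ℕ) :
    Differentiable ℂ fun s : ℂ ↦ Ring.multichoose s n := by
  have h (s : ℂ) : Ring.multichoose s n = (ascPochhammer ℂ n).eval s / n.factorial :=
    eq_div_of_mul_eq (Nat.cast_ne_zero.mpr n.factorial_ne_zero)
      ((mul_comm _ _).trans (factorial_mul_multichoose s n))
  simp only [h]
  exact (ascPochhammer ℂ n).differentiable.div_const _

lemma norm_multichoose_le {s : ℂ} {R : ℝ} (hs : ‖s‖ ≤ R) (n : ℕ) :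
    ‖Ring.multichoose s n‖ ≤ ‖Ring.multichoose (R : ℂ) n‖ := by
  induction n with
  | zero => simp
  | succ n ih =>
    have hR : ‖s + n‖ ≤ ‖(R + n : ℂ)‖ := by
      have hRn : ‖(R + n : ℂ)‖ = R + n := by
        rw [← Complex.ofReal_natCast, ← Complex.ofReal_add, Complex.norm_real,
          Real.norm_of_nonneg (by linarith [norm_nonneg s, n.cast_nonneg (α := ℝ)])]
      simpa [hRn] using (norm_add_le s n).trans (by gcongr; simp)
    refine le_of_mul_le_mul_left ?_ (norm_pos_iff.mpr (n.cast_add_one_ne_zero (R := ℂ)))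
    simp only [← norm_mul, succ_mul_multichoose_succ_right]
    simp only [norm_mul]
    gcongr

lemma hasSum_multichoose_mul_pow (s : ℂ) {z : ℂ} (hz : ‖z‖ < 1) :
    HasSum (fun n ↦ Ring.multichoose s n * z ^ n) (1 / (1 - z) ^ s) := by
  have h := (Complex.one_div_one_sub_cpow_hasFPowerSeriesOnBall_zero s).hasSum (y := z)
    (by simpa [enorm_eq_nnnorm, ← NNReal.coe_lt_coe] using hz)
  simpa [Ring.multichoose_eq, FormalMultilinearSeries.ofScalars_apply_eq, mul_comm] using h

lemma multichoose_add_two (s : ℂ) (n : ℕ) :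
    Ring.multichoose s (n + 2) =
      s * (s + 1) / ((n + 1) * (n + 2)) * Ring.multichoose (s + 2) n := by
  have h₁ := succ_mul_multichoose_succ_left s (n + 1)
  have h₂ := succ_mul_multichoose_succ_left (s + 1) n
  have hn₁ : (n + 1 : ℂ) ≠ 0 := n.cast_add_one_ne_zero
  have hn₂ : (n + 2 : ℂ) ≠ 0 := mod_cast (n + 1).succ_ne_zero
  rw [add_assoc, one_add_one_eq_two] at h₂
  push_cast at h₁
  rw [add_assoc, one_add_one_eq_two] at h₁
  field_simp
  linear_combination (n + 1) * h₁ + s * h₂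

lemma hasDerivAt_multichoose_neg_one (n : ℕ) :
    HasDerivAt (fun s : ℂ ↦ Ring.multichoose s (n + 2)) (-1 / ((n + 1) * (n + 2))) (-1) := by
  have h₁ : HasDerivAt (fun s : ℂ ↦ s * (s + 1) / ((n + 1) * (n + 2)))
      (-1 / ((n + 1) * (n + 2))) (-1) := by
    simpa using ((hasDerivAt_id (-1 : ℂ)).mul ((hasDerivAt_id (-1 : ℂ)).add_const 1)).div_const
      (((n : ℂ) + 1) * (n + 2))
  have h₂ : DifferentiableAt ℂ (fun s : ℂ ↦ Ring.multichoose (s + 2) n) (-1) :=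
    ((differentiable_multichoose n) _).comp (-1) (by fun_prop)
  simp only [multichoose_add_two]
  convert! h₁.mul h₂.hasDerivAt using 1
  norm_num

lemma norm_one_div_natCast_add_one_cpow_le {z w : ℂ} (h : z.re ≤ w.re) (n : ℕ) :
    ‖1 / ((n : ℂ) + 1) ^ w‖ ≤ ‖1 / ((n : ℂ) + 1) ^ z‖ := by
  have hpow (u : ℂ) : ‖((n : ℂ) + 1) ^ u‖ = ((n : ℝ) + 1) ^ u.re :=
    mod_cast Complex.norm_natCast_cpow_of_pos n.succ_pos u
  simp only [norm_div, hpow]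
  gcongr
  simp

lemma summable_one_div_natCast_add_one_cpow {s : ℂ} (hs : 1 < s.re) :
    Summable fun n : ℕ ↦ 1 / ((n : ℂ) + 1) ^ s := by
  simpa using (summable_nat_add_iff 1).mpr (Complex.summable_one_div_nat_cpow.mpr hs)

lemma hasSum_riemannZeta {s : ℂ} (hs : 1 < s.re) :
    HasSum (fun n : ℕ ↦ 1 / ((n : ℂ) + 1) ^ s) (riemannZeta s) :=
  zeta_eq_tsum_one_div_nat_add_one_cpow hs ▸ (summable_one_div_natCast_add_one_cpow hs).hasSum

lemma norm_riemannZeta_le {z w : ℂ} (hz : 1 < z.re) (h : z.re ≤ w.re) :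
    ‖riemannZeta w‖ ≤ ∑' n : ℕ, ‖1 / ((n : ℂ) + 1) ^ z‖ :=
  (hasSum_riemannZeta (hz.trans_le h)).tsum_eq ▸
    tsum_of_norm_bounded (summable_one_div_natCast_add_one_cpow hz).norm.hasSum
      (norm_one_div_natCast_add_one_cpow_le h)

lemma two_cpow_mul_one_div_natCast_add_one_cpow (s : ℂ) (n : ℕ) :
    2 ^ s * (1 / ((n : ℂ) + 1) ^ s) = 1 / (((n : ℂ) + 1) / 2) ^ s := by
  have h2 : (2 : ℂ) ^ s ≠ 0 := by simp [Complex.cpow_eq_zero_iff]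
  have h := Complex.mul_cpow_ofReal_nonneg (a := 2) (b := (n + 1) / 2)
    (by positivity) (by positivity) s
  push_cast at h
  rw [mul_div_cancel₀ _ two_ne_zero] at h
  rw [h]
  field_simp

lemma hasSum_one_div_natCast_add_half_cpow {s : ℂ} (hs : 1 < s.re) :
    HasSum (fun k : ℕ ↦ 1 / ((k : ℂ) + 1 / 2) ^ s) ((2 ^ s - 1) * riemannZeta s) := by
  let f : ℕ → ℂ := fun n ↦ 1 / (((n : ℂ) + 1) / 2) ^ s
  have hall : HasSum f (2 ^ s * riemannZeta s) :=
    ((hasSum_riemannZeta hs).mul_left (2 ^ s)).congr_fun fun n ↦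
      (two_cpow_mul_one_div_natCast_add_one_cpow s n).symm
  have heven (k : ℕ) : f (2 * k) = 1 / ((k : ℂ) + 1 / 2) ^ s := by
    simp only [f]
    push_cast
    ring_nf
  have hodd (k : ℕ) : f (2 * k + 1) = 1 / ((k : ℂ) + 1) ^ s := by
    simp only [f]
    push_cast
    ring_nf
  have hsum : Summable fun k : ℕ ↦ f (2 * k) :=
    hall.summable.comp_injective (mul_right_injective₀ (two_ne_zero' ℕ))
  have hadd := hsum.hasSum.even_add_odd ((hasSum_riemannZeta hs).congr_fun hodd)
  rw [sub_one_mul, ← hadd.unique hall, add_sub_cancel_right]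
  exact hsum.hasSum.congr_fun fun k ↦ (heven k).symm

lemma hasSum_multichoose_div_cpow_mul_pow (s : ℂ) {x : ℝ} (hx : |x| < 1) (k : ℕ) :
    HasSum (fun n : ℕ ↦ Ring.multichoose s n * x ^ n * (1 / ((k : ℂ) + 1) ^ (s + n)))
      (1 / ((k : ℂ) + 1 - x) ^ s) := by
  have hk : (k + 1 : ℂ) ≠ 0 := k.cast_add_one_ne_zero
  have hk₁ : (1 : ℝ) ≤ k + 1 := by simp
  have hxk : |x / (k + 1)| < 1 := by
    rw [abs_div, abs_of_pos (by positivity : (0 : ℝ) < k + 1), div_lt_one (by positivity)]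
    exact hx.trans_le hk₁
  have hmul : ((k : ℂ) + 1 - x) ^ s =
      ((k : ℂ) + 1) ^ s * (1 - ((x / (k + 1) : ℝ) : ℂ)) ^ s := by
    have h := Complex.mul_cpow_ofReal_nonneg (a := k + 1) (b := 1 - x / (k + 1))
      (by positivity) (by linarith [(abs_lt.mp hxk).2]) s
    rw [← Complex.ofReal_mul, mul_sub, mul_one,
      mul_div_cancel₀ _ (by positivity : (k + 1 : ℝ) ≠ 0)] at h
    exact mod_cast h
  have h := (hasSum_multichoose_mul_pow s
    (by rwa [Complex.norm_real] : ‖((x / (k + 1) : ℝ) : ℂ)‖ < 1)).mul_left (1 / ((k : ℂ) + 1) ^ s)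
  rw [one_div_mul_one_div, ← hmul] at h
  refine h.congr_fun fun n ↦ ?_
  rw [Complex.cpow_add _ _ hk, Complex.cpow_natCast]
  push_cast
  rw [div_pow]
  field_simp

theorem hasSum_multichoose_mul_pow_mul_riemannZeta {s : ℂ} (hs : 1 < s.re) {x : ℝ}
    (hx : |x| < 1) :
    HasSum (fun n : ℕ ↦ Ring.multichoose s n * x ^ n * riemannZeta (s + n))
      (∑' k : ℕ, 1 / ((k : ℂ) + 1 - x) ^ s) := by
  have hre (n : ℕ) : s.re ≤ (s + n).re := by simp
  have hsum : Summable fun p : ℕ × ℕ ↦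
      Ring.multichoose s p.1 * x ^ p.1 * (1 / ((p.2 : ℂ) + 1) ^ (s + p.1)) := by
    refine Summable.of_norm_bounded (g := fun p : ℕ × ℕ ↦
      ‖Ring.multichoose s p.1 * x ^ p.1‖ * ‖1 / ((p.2 : ℂ) + 1) ^ s‖) ?_ fun p ↦ ?_
    · exact (hasSum_multichoose_mul_pow s (by simpa using hx)).summable.norm.mul_of_nonneg
        (summable_one_div_natCast_add_one_cpow hs).norm
        (fun _ ↦ norm_nonneg _) (fun _ ↦ norm_nonneg _)
    · rw [norm_mul]
      gcongr
      exact norm_one_div_natCast_add_one_cpow_le (hre _) _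
  have hrow := hsum.hasSum.prod_fiberwise fun n ↦
    (hasSum_riemannZeta (hs.trans_le (hre n))).mul_left (Ring.multichoose s n * x ^ n)
  have hcol := hsum.prod_symm.hasSum.prod_fiberwise
    (hasSum_multichoose_div_cpow_mul_pow s hx)
  have hswap := (Equiv.prodComm ℕ ℕ).tsum_eq fun p : ℕ × ℕ ↦
    Ring.multichoose s p.1 * x ^ p.1 * (1 / ((p.2 : ℂ) + 1) ^ (s + p.1))
  rw [hcol.tsum_eq]
  exact hswap.symm ▸ hrow

section EvenOdd

variable {R : Type*} [Ring R] [TopologicalSpace R] [IsTopologicalAddGroup R]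
  {c : ℕ → R} {x a b : R}

lemma hasSum_two_mul_even_terms (ha : HasSum (fun n ↦ c n * x ^ n) a)
    (hb : HasSum (fun n ↦ c n * (-x) ^ n) b) :
    HasSum (fun j ↦ 2 * (c (2 * j) * x ^ (2 * j))) (a + b) := by
  have hinj : Function.Injective fun j : ℕ ↦ 2 * j := mul_right_injective₀ two_ne_zero
  have h := (hinj.hasSum_iff fun n hn ↦ ?_).mpr (ha.add hb)
  · simpa [Function.comp_def, two_mul] using h
  · have hn : Odd n := by
      rw [← Nat.not_even_iff_odd, even_iff_exists_two_mul]
      exact fun ⟨k, hk⟩ ↦ hn ⟨k, hk.symm⟩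
    simp [hn.neg_pow]

lemma hasSum_two_mul_odd_terms (ha : HasSum (fun n ↦ c n * x ^ n) a)
    (hb : HasSum (fun n ↦ c n * (-x) ^ n) b) :
    HasSum (fun j ↦ 2 * (c (2 * j + 1) * x ^ (2 * j + 1))) (a - b) := by
  have hinj : Function.Injective fun j : ℕ ↦ 2 * j + 1 := fun _ _ h ↦ by simpa using h
  have h := (hinj.hasSum_iff fun n hn ↦ ?_).mpr (ha.sub hb)
  · simpa [Function.comp_def, two_mul, Odd.neg_pow] using h
  · have hn : Even n := by
      rw [← Nat.not_odd_iff_even]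
      exact fun ⟨k, hk⟩ ↦ hn ⟨k, hk.symm⟩
    simp [hn.neg_pow]

end EvenOdd

lemma hasSum_multichoose_mul_riemannZeta_half {s : ℂ} (hs : 1 < s.re) :
    HasSum (fun n : ℕ ↦ Ring.multichoose s n * riemannZeta (s + n) * (1 / 2) ^ n)
      ((2 ^ s - 1) * riemannZeta s) := by
  have h := hasSum_multichoose_mul_pow_mul_riemannZeta hs (x := 1 / 2) (by norm_num [abs_lt])
  have hk (k : ℕ) : (k : ℂ) + 1 - (1 / 2 : ℝ) = k + 1 / 2 := by push_cast; ring
  simp only [hk, (hasSum_one_div_natCast_add_half_cpow hs).tsum_eq] at h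
  exact h.congr_fun fun n ↦ by push_cast; ring

lemma hasSum_multichoose_mul_riemannZeta_neg_half {s : ℂ} (hs : 1 < s.re) :
    HasSum (fun n : ℕ ↦ Ring.multichoose s n * riemannZeta (s + n) * (-(1 / 2)) ^ n)
      ((2 ^ s - 1) * riemannZeta s - 2 ^ s) := by
  have h := hasSum_multichoose_mul_pow_mul_riemannZeta hs (x := -(1 / 2)) (by norm_num [abs_lt])
  have hk (k : ℕ) : (k : ℂ) + 1 - (-(1 / 2) : ℝ) = (k + 1 : ℕ) + 1 / 2 := by push_cast; ring
  have hzero : 1 / (((0 : ℕ) : ℂ) + 1 / 2) ^ s = 2 ^ s := by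
    simpa using (two_cpow_mul_one_div_natCast_add_one_cpow s 0).symm
  have hshift := (hasSum_nat_add_iff' 1).mpr (hasSum_one_div_natCast_add_half_cpow hs)
  rw [Finset.sum_range_one, hzero] at hshift
  simp only [hk, hshift.tsum_eq] at h
  exact h.congr_fun fun n ↦ by push_cast; ring

/-- The coefficient of `ζ(s + 2j)` in the sum of the even part of
`∑ₙ (s)ₙ / n! * ζ(s + n) * xⁿ` and the odd part of the same series at `s - 1`, for `x = 1 / 2`.
Here `Ring.multichoose s n` is `(s)ₙ / n!`. -/
noncomputable def zetaCoeff (j : ℕ) (s : ℂ) : ℂ :=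
  Ring.multichoose s (2 * j) * (1 / 2) ^ (2 * j) +
    Ring.multichoose (s - 1) (2 * j + 1) * (1 / 2) ^ (2 * j + 1)

/-- The `j`-th term of the series `∑ⱼ cⱼ(s) * ζ(s + 2j)`, whose derivatives at `s = -1` give the
series to be summed. -/
noncomputable def zetaTerm (j : ℕ) (s : ℂ) : ℂ :=
  zetaCoeff j s * riemannZeta (s + 2 * j)

lemma hasSum_zetaTerm {s : ℂ} (hs : 2 < s.re) :
    HasSum (zetaTerm · s) ((2 ^ s - 1) * riemannZeta s - 2 ^ s / 4) := by
  have hs₀ : 1 < s.re := by linarith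
  have hs₁ : 1 < (s - 1).re := by simpa using by linarith
  have heven := hasSum_two_mul_even_terms (hasSum_multichoose_mul_riemannZeta_half hs₀)
    (hasSum_multichoose_mul_riemannZeta_neg_half hs₀)
  have hodd := hasSum_two_mul_odd_terms (hasSum_multichoose_mul_riemannZeta_half hs₁)
    (hasSum_multichoose_mul_riemannZeta_neg_half hs₁)
  have h := (heven.add hodd).div_const 2
  rw [Complex.cpow_sub _ _ two_ne_zero, Complex.cpow_one] at h
  convert! h using 1
  · ext j
    have hj : s - 1 + (2 * j + 1 : ℕ) = s + 2 * j := by push_cast; ring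
    rw [hj, zetaTerm, zetaCoeff]
    push_cast
    ring
  · ring

lemma zetaCoeff_eq (j : ℕ) (s : ℂ) :
    zetaCoeff j s =
      Ring.multichoose s (2 * j) * ((4 * j + s + 1) / (2 * (2 * j + 1) * 4 ^ j)) := by
  have h := succ_mul_multichoose_succ_left (s - 1) (2 * j)
  have hj : (2 * j + 1 : ℂ) ≠ 0 := mod_cast (2 * j).succ_ne_zero
  rw [sub_add_cancel] at h
  push_cast at h
  rw [zetaCoeff, eq_div_of_mul_eq hj ((mul_comm _ _).trans h), pow_succ, pow_mul,
    show (1 / 2 : ℂ) ^ 2 = 1 / 4 by norm_num, one_div_pow]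
  field_simp
  ring

lemma differentiable_zetaCoeff (j : ℕ) : Differentiable ℂ (zetaCoeff j) := by
  have h := differentiable_multichoose (2 * j)
  have h' : Differentiable ℂ fun s : ℂ ↦ Ring.multichoose (s - 1) (2 * j + 1) :=
    (differentiable_multichoose (2 * j + 1)).comp (by fun_prop : Differentiable ℂ fun s : ℂ ↦ s - 1)
  unfold zetaCoeff
  fun_prop

lemma exists_summable_norm_zetaCoeff_le (R : ℝ) :
    ∃ u : ℕ → ℝ, Summable u ∧ ∀ j s, ‖s‖ ≤ R → ‖zetaCoeff j s‖ ≤ u j := by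
  let v (r : ℝ) (n : ℕ) : ℝ := ‖Ring.multichoose (r : ℂ) n * (1 / 2) ^ n‖
  have hv (r : ℝ) : Summable (v r) :=
    (hasSum_multichoose_mul_pow (r : ℂ) (by norm_num)).summable.norm
  have hle {r : ℝ} {s : ℂ} (hs : ‖s‖ ≤ r) (n : ℕ) :
      ‖Ring.multichoose s n * (1 / 2) ^ n‖ ≤ v r n := by
    simp only [v, norm_mul]
    gcongr
    exact norm_multichoose_le hs n
  refine ⟨fun j ↦ v R (2 * j) + v (R + 1) (2 * j + 1), ?_, fun j s hs ↦ ?_⟩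
  · exact ((hv R).comp_injective (mul_right_injective₀ (two_ne_zero' ℕ))).add
      ((hv (R + 1)).comp_injective (i := fun j ↦ 2 * j + 1) fun _ _ h ↦ by simpa using h)
  · have hs' : ‖s - 1‖ ≤ R + 1 := (norm_sub_le s 1).trans (by simpa using hs)
    exact (norm_add_le _ _).trans (add_le_add (hle hs _) (hle hs' _))

/-- The series `∑ⱼ cⱼ(s) * ζ(s + 2j)` restricted to `j ≥ 2`, which continues it to `Re s > -2`: the
zeta factors of the two omitted terms have poles at `s = 1` and `s = -1`. -/
noncomputable def zetaTail (s : ℂ) : ℂ := ∑' j, zetaTerm (j + 2) s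

lemma isOpen_neg_two_lt_re : IsOpen {s : ℂ | -2 < s.re} :=
  isOpen_lt continuous_const Complex.continuous_re

lemma two_le_re_add {s : ℂ} (hs : -2 < s.re) (j : ℕ) : 2 ≤ (s + 2 * (j + 2 : ℕ)).re := by
  have := j.cast_nonneg (α := ℝ)
  simpa using by linarith

lemma differentiableAt_riemannZeta_add {s : ℂ} (hs : -2 < s.re) (j : ℕ) :
    DifferentiableAt ℂ (fun s ↦ riemannZeta (s + 2 * (j + 2 : ℕ))) s := by
  have hne : s + 2 * (j + 2 : ℕ) ≠ 1 := fun h ↦ by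
    have := h ▸ two_le_re_add hs j
    norm_num at this
  exact (differentiableAt_riemannZeta hne).comp (f := fun s : ℂ ↦ s + 2 * (j + 2 : ℕ)) s
    (by fun_prop)

lemma differentiableAt_zetaTerm {s : ℂ} (hs : -2 < s.re) (j : ℕ) :
    DifferentiableAt ℂ (zetaTerm (j + 2)) s :=
  (differentiable_zetaCoeff _ s).mul (differentiableAt_riemannZeta_add hs j)

lemma summableLocallyUniformlyOn_zetaTerm :
    SummableLocallyUniformlyOn (fun j ↦ zetaTerm (j + 2)) {s | -2 < s.re} := by
  refine SummableLocallyUniformlyOn_of_locally_bounded isOpen_neg_two_lt_re fun K hK hKc ↦ ?_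
  obtain ⟨R, hR⟩ := hKc.isBounded.exists_norm_le
  obtain ⟨u, hu, hle⟩ := exists_summable_norm_zetaCoeff_le R
  refine ⟨fun j ↦ u (j + 2) * ∑' n : ℕ, ‖1 / ((n : ℂ) + 1) ^ (2 : ℂ)‖,
    ((summable_nat_add_iff 2).mpr hu).mul_right _, fun j s hs ↦ ?_⟩
  have hcoeff := hle (j + 2) s (hR s hs)
  have hzeta : ‖riemannZeta (s + 2 * (j + 2 : ℕ))‖ ≤ ∑' n : ℕ, ‖1 / ((n : ℂ) + 1) ^ (2 : ℂ)‖ :=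
    norm_riemannZeta_le (by simp) (two_le_re_add (hK hs) j)
  exact (norm_mul _ _).trans_le
    (mul_le_mul hcoeff hzeta (norm_nonneg _) ((norm_nonneg _).trans hcoeff))

lemma hasSum_deriv_of_summableLocallyUniformlyOn {ι : Type*} {f : ι → ℂ → ℂ} {U : Set ℂ} {z : ℂ}
    (hU : IsOpen U) (hsum : SummableLocallyUniformlyOn f U)
    (hf : ∀ i, DifferentiableOn ℂ (f i) U) (hz : z ∈ U) :
    HasSum (fun i ↦ deriv (f i) z) (deriv (fun w ↦ ∑' i, f i w) z) := by
  have hlim := hasSumLocallyUniformlyOn_iff_tendstoLocallyUniformlyOn.mp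
    hsum.hasSumLocallyUniformlyOn
  have hderiv := (hlim.deriv (.of_forall fun t ↦ .fun_sum fun i _ ↦ hf i) hU).tendsto_at hz
  refine hderiv.congr fun t ↦ ?_
  exact deriv_fun_sum fun i _ ↦ (hf i).differentiableAt (hU.mem_nhds hz)

lemma differentiableOn_zetaTail : DifferentiableOn ℂ zetaTail {s | -2 < s.re} :=
  summableLocallyUniformlyOn_zetaTerm.differentiableOn isOpen_neg_two_lt_re
    fun j _ hs ↦ differentiableAt_zetaTerm hs j

lemma riemannZeta₁_eq {s : ℂ} (hs : s ≠ 1) : riemannZeta₁ s = (s - 1) * riemannZeta s := by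
  rw [riemannZeta_eq_inv_sub_mul hs, mul_inv_cancel_left₀ (sub_ne_zero.mpr hs)]

lemma zetaCoeff_zero (s : ℂ) : zetaCoeff 0 s = (s + 1) / 2 := by
  simp [zetaCoeff_eq]

lemma zetaCoeff_one (s : ℂ) : zetaCoeff 1 s = s * (s + 1) * (s + 5) / 48 := by
  have h : Ring.multichoose s 2 = s * (s + 1) / 2 := by simpa using multichoose_add_two s 0
  rw [zetaCoeff_eq, mul_one, h, Nat.cast_one]
  ring

lemma sub_one_mul_zetaTail_of_two_lt_re {s : ℂ} (hs : 2 < s.re) :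
    (s - 1) * zetaTail s = (2 ^ s - 1 - (s + 1) / 2) * riemannZeta₁ s -
      (s - 1) * (2 ^ s / 4 + s * (s + 5) / 48 * riemannZeta₁ (s + 2)) := by
  have htail : zetaTail s = _ := ((hasSum_nat_add_iff' 2).mpr (hasSum_zetaTerm hs)).tsum_eq
  have hne {w : ℂ} (hw : 2 < w.re) : w ≠ 1 := by rintro rfl; norm_num at hw
  have hs₂ : 2 < (s + 2).re := by simpa using by linarith
  rw [htail, riemannZeta₁_eq (hne hs), riemannZeta₁_eq (hne hs₂)]
  simp only [Finset.sum_range_succ, Finset.sum_range_zero, zetaTerm, zetaCoeff_zero,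
    zetaCoeff_one, Nat.cast_zero, Nat.cast_one, mul_zero, mul_one, add_zero, zero_add]
  ring

theorem sub_one_mul_zetaTail {s : ℂ} (hs : -2 < s.re) :
    (s - 1) * zetaTail s = (2 ^ s - 1 - (s + 1) / 2) * riemannZeta₁ s -
      (s - 1) * (2 ^ s / 4 + s * (s + 5) / 48 * riemannZeta₁ (s + 2)) := by
  have : Differentiable ℂ fun s : ℂ ↦ (2 : ℂ) ^ s := fun s ↦
    differentiableAt_id.const_cpow (.inl two_ne_zero)
  have hl : DifferentiableOn ℂ (fun s ↦ (s - 1) * zetaTail s) {s | -2 < s.re} := by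
    have := differentiableOn_zetaTail
    fun_prop
  have hr : Differentiable ℂ fun s ↦ (2 ^ s - 1 - (s + 1) / 2) * riemannZeta₁ s -
      (s - 1) * (2 ^ s / 4 + s * (s + 5) / 48 * riemannZeta₁ (s + 2)) := by
    fun_prop
  refine (hl.analyticOnNhd isOpen_neg_two_lt_re).eqOn_of_preconnected_of_eventuallyEq
    (hr.differentiableOn.analyticOnNhd isOpen_neg_two_lt_re)
    (convex_halfSpace_re_gt _).isPreconnected (z₀ := 3) (by norm_num) ?_ hs
  filter_upwards [(isOpen_lt continuous_const Complex.continuous_re).mem_nhds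
    (by norm_num : (2 : ℝ) < (3 : ℂ).re)] with s hs
  exact sub_one_mul_zetaTail_of_two_lt_re hs

lemma riemannZeta_neg_one : riemannZeta (-1) = -1 / 12 := by
  have h := riemannZeta_neg_nat_eq_bernoulli' 1
  rw [Nat.cast_one, one_add_one_eq_two, bernoulli'_two] at h
  rw [h]
  norm_num

lemma hasDerivAt_two_cpow_neg_one :
    HasDerivAt (fun s : ℂ ↦ (2 : ℂ) ^ s) (Complex.log 2 / 2) (-1) := by
  have h := (hasDerivAt_id (-1 : ℂ)).const_cpow (c := 2) (.inl two_ne_zero)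
  rw [id, Complex.cpow_neg_one, mul_one, inv_mul_eq_div] at h
  exact h

lemma hasDerivAt_riemannZeta₁_one : HasDerivAt riemannZeta₁ eulerMascheroniConstant 1 :=
  deriv_riemannZeta₁_one ▸ (differentiable_riemannZeta₁ 1).hasDerivAt

lemma zetaTail_eventuallyEq_nhds_neg_one :
    zetaTail =ᶠ[𝓝 (-1)] fun s ↦ (2 ^ s - 1 - (s + 1) / 2) * riemannZeta s -
      (2 ^ s / 4 + s * (s + 5) / 48 * riemannZeta₁ (s + 2)) := by
  filter_upwards [isOpen_neg_two_lt_re.mem_nhds (by norm_num : -2 < (-1 : ℂ).re),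
    isOpen_ne.mem_nhds (by norm_num : (-1 : ℂ) ≠ 1)] with s hs hs₁
  refine mul_left_cancel₀ (sub_ne_zero.mpr hs₁) ?_
  rw [sub_one_mul_zetaTail hs, riemannZeta₁_eq hs₁]
  ring

lemma deriv_zetaTail_neg_one :
    deriv zetaTail (-1) = eulerMascheroniConstant / 12 - deriv riemannZeta (-1) / 2 -
      Complex.log 2 / 6 - 1 / 48 := by
  have hid := hasDerivAt_id (-1 : ℂ)
  have hpow := hasDerivAt_two_cpow_neg_one
  have hzeta := (differentiableAt_riemannZeta (s := -1) (by norm_num)).hasDerivAt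
  have hzeta₁ : HasDerivAt (fun s ↦ riemannZeta₁ (s + 2)) eulerMascheroniConstant (-1) :=
    HasDerivAt.comp_add_const (-1) 2 (by norm_num [hasDerivAt_riemannZeta₁_one])
  have h := (((hpow.sub_const 1).sub ((hid.add_const 1).div_const 2)).mul hzeta).sub
    ((hpow.div_const 4).add (((hid.mul (hid.add_const 5)).div_const 48).mul hzeta₁))
  refine zetaTail_eventuallyEq_nhds_neg_one.deriv_eq.trans (h.deriv.trans ?_)
  norm_num [riemannZeta_neg_one, Complex.cpow_neg_one]
  ring

lemma deriv_zetaTerm_neg_one (j : ℕ) :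
    deriv (zetaTerm (j + 2)) (-1) =
      -(riemannZeta (2 * (j + 1) + 1) / ((2 * j + 3) * (2 * j + 5) * 4 ^ (j + 1))) / 4 := by
  let g (s : ℂ) : ℂ := (4 * (j + 2 : ℕ) + s + 1) / (2 * (2 * (j + 2 : ℕ) + 1) * 4 ^ (j + 2)) *
    riemannZeta (s + 2 * (j + 2 : ℕ))
  have hg : DifferentiableAt ℂ g (-1) := by
    have := differentiableAt_riemannZeta_add (by norm_num : -2 < (-1 : ℂ).re) j
    fun_prop
  have hmul : zetaTerm (j + 2) = fun s ↦ Ring.multichoose s (2 * j + 2 + 2) * g s := by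
    ext s
    rw [zetaTerm, zetaCoeff_eq, mul_assoc]
    rfl
  have hzero : Ring.multichoose (-1 : ℂ) (2 * j + 2 + 2) = 0 := by simp [multichoose_add_two]
  have harg : (-1 : ℂ) + 2 * (j + 2 : ℕ) = 2 * (j + 1) + 1 := by push_cast; ring
  have h₂ : (j + 2 : ℂ) ≠ 0 := mod_cast (j + 1).succ_ne_zero
  have h₃ : (2 * j + 3 : ℂ) ≠ 0 := mod_cast (2 * j + 2).succ_ne_zero
  have h₅ : (2 * j + 5 : ℂ) ≠ 0 := mod_cast (2 * j + 4).succ_ne_zero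
  have hderiv : (-1 : ℂ) / (((2 * j + 2 : ℕ) + 1) * ((2 * j + 2 : ℕ) + 2)) =
      -1 / ((2 * j + 3) * (2 * (j + 2))) := by
    push_cast
    ring_nf
  have hval : g (-1) =
      4 * (j + 2) / (2 * (2 * j + 5) * 4 ^ (j + 2)) * riemannZeta (2 * (j + 1) + 1) := by
    simp only [g, harg]
    push_cast
    ring_nf
  rw [hmul, ((hasDerivAt_multichoose_neg_one (2 * j + 2)).fun_mul hg.hasDerivAt).deriv, hzero,
    zero_mul, add_zero, hderiv, hval]
  field_simp
  ring

theorem hasSum_riemannZeta_odd_div :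
    HasSum (fun n : ℕ ↦
      riemannZeta (2 * (n + 1) + 1) / ((2 * n + 3) * (2 * n + 5) * 4 ^ (n + 1)))
      (2 * deriv riemannZeta (-1) + 1 / 12 - eulerMascheroniConstant / 3 +
        2 / 3 * Complex.log 2) := by
  have h := (hasSum_deriv_of_summableLocallyUniformlyOn isOpen_neg_two_lt_re
    summableLocallyUniformlyOn_zetaTerm
    (fun j s hs ↦ (differentiableAt_zetaTerm hs j).differentiableWithinAt)
    (by norm_num : -2 < (-1 : ℂ).re)).mul_left (-4)
  change HasSum _ (-4 * deriv zetaTail (-1)) at h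
  rw [deriv_zetaTail_neg_one] at h
  simp only [deriv_zetaTerm_neg_one] at h
  convert! h using 1
  · ext n; ring
  · ring

theorem stmt17 (A : ℝ)
    (hA : (Real.log A : ℂ) = 1 / 12 - deriv riemannZeta (-1)) :
    ∑' n : ℕ, riemannZeta (2 * (n + 1) + 1) / ((2 * n + 3) * (2 * n + 5) * 4 ^ (n + 1)) =
      ((-2 * Real.log A + 1 / 4 - Real.eulerMascheroniConstant / 3 +
        (2 / 3) * Real.log 2 : ℝ) : ℂ) := by
  rw [hasSum_riemannZeta_odd_div.tsum_eq]
  push_cast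
  rw [hA, Complex.ofReal_log zero_le_two, Complex.ofReal_ofNat]
  ring
end

section
/- For every real θ with 0 < θ < 2π, the identity Cl₂(θ)/θ = 1 - log θ + ∑_{n=1}^∞ ζ(2n)/(n(2n+1)) · (θ/(2π))^{2n} holds, where Cl₂(θ) = ∑_{k=1}^∞ sin(kθ)/k² is the Clausen function. -/
open Real

/-!
For `|z| < 1` take real parts in `-log (1 - z) = ∑ zᵏ / k` at `z = r e^{it}` and integrate over
`[0, θ]`: this gives `∑ rᵏ sin (kθ) / k² = -∫₀^θ log |1 - r e^{it}| dt`. As `r → 1⁻` the series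
tends to `Cl₂ θ` by Abel's theorem and the integral converges by domination, because
`|1 - r e^{it}| ≥ |sin t|` for every `r`; hence `Cl₂ θ = -∫₀^θ log |2 sin (t / 2)| dt`. Splitting
`2 sin (t / 2) = t sinc (t / 2)` separates the singular part, which gives `θ - θ log |θ|`, from
`-log sinc`, which by Euler's product is a power series with nonnegative coefficients and can
therefore be integrated termwise up to the boundary of its disc of convergence.
-/

open Filter MeasureTheory Topology

/-- The Clausen function `Cl₂ θ = ∑_{k ≥ 1} sin (kθ) / k²`, with the summation index shifted to
start at `0`. -/
noncomputable def clausen (θ : ℝ) : ℝ := ∑' k : ℕ, sin ((k + 1) * θ) / ((k : ℝ) + 1) ^ 2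

/-- The real Dirichlet series `ζ(s) = ∑_{k ≥ 1} 1 / kˢ` at a natural number `s`, with the summation
index shifted to start at `0`. It supplies, at even `s`, the coefficients in the expansion of the
Clausen function. For `s ≤ 1` the series diverges and the value is the junk value `0`. -/
noncomputable def zetaNat (s : ℕ) : ℝ := ∑' k : ℕ, 1 / ((k : ℝ) + 1) ^ s

section LogSinc

variable {x t a b : ℝ}

lemma sinc_pos_of_abs_lt_pi (ht : |t| < π) : 0 < sinc t := by
  have pos_case {u : ℝ} (hu : 0 < u) (huπ : u < π) : 0 < sinc u := by
    rw [sinc_of_ne_zero hu.ne']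
    exact div_pos (sin_pos_of_pos_of_lt_pi hu huπ) hu
  obtain ⟨hneg, hlt⟩ := abs_lt.mp ht
  rcases lt_trichotomy t 0 with h | rfl | h
  · simpa only [sinc_neg] using pos_case (neg_pos.mpr h) (neg_lt.mp hneg)
  · simp
  · exact pos_case h hlt

lemma tendsto_euler_sinc_prod (x : ℝ) :
    Tendsto (fun n ↦ ∏ k ∈ Finset.range n, (1 - x ^ 2 / ((k : ℝ) + 1) ^ 2)) atTop
      (𝓝 (sinc (π * x))) := by
  rcases eq_or_ne x 0 with rfl | hx
  · simp
  · have hπx : π * x ≠ 0 := mul_ne_zero pi_ne_zero hx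
    rw [sinc_of_ne_zero hπx]
    simpa only [mul_div_cancel_left₀ _ hπx] using (tendsto_euler_sin_prod x).div_const (π * x)

lemma sq_div_add_one_sq_lt_one (hx : |x| < 1) (k : ℕ) : x ^ 2 / ((k : ℝ) + 1) ^ 2 < 1 := by
  rw [div_lt_one (by positivity)]
  calc x ^ 2 < 1 := (sq_lt_one_iff_abs_lt_one x).mpr hx
    _ ≤ ((k : ℝ) + 1) ^ 2 := one_le_pow₀ (by simp)

lemma hasSum_neg_log_one_sub_sq_div (hx : |x| < 1) :
    HasSum (fun k : ℕ ↦ -log (1 - x ^ 2 / ((k : ℝ) + 1) ^ 2)) (-log (sinc (π * x))) := by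
  have hfactor_pos (k : ℕ) : 0 < 1 - x ^ 2 / ((k : ℝ) + 1) ^ 2 :=
    sub_pos.mpr (sq_div_add_one_sq_lt_one hx k)
  have hfactor_le (k : ℕ) : 1 - x ^ 2 / ((k : ℝ) + 1) ^ 2 ≤ 1 := sub_le_self _ (by positivity)
  have hsinc : 0 < sinc (π * x) := by
    refine sinc_pos_of_abs_lt_pi ?_
    rw [abs_mul, abs_of_pos pi_pos]
    exact mul_lt_of_lt_one_right pi_pos hx
  rw [hasSum_iff_tendsto_nat_of_nonneg fun k ↦
    neg_nonneg.mpr (log_nonpos (hfactor_pos k).le (hfactor_le k))]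
  refine ((tendsto_euler_sinc_prod x).log hsinc.ne').neg.congr fun n ↦ ?_
  rw [log_prod fun k _ ↦ (hfactor_pos k).ne', Finset.sum_neg_distrib]

lemma hasSum_tsum_comm_of_nonneg {ι κ : Type*} {f : ι → κ → ℝ} {g : ι → ℝ} {s : ℝ}
    (hf : ∀ i j, 0 ≤ f i j) (hrow : ∀ i, HasSum (f i) (g i)) (hg : HasSum g s) :
    HasSum (fun j ↦ ∑' i, f i j) s := by
  have hsummable : Summable fun p : ι × κ ↦ f p.1 p.2 := by
    rw [summable_prod_of_nonneg fun p ↦ hf p.1 p.2]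
    refine ⟨fun i ↦ (hrow i).summable, ?_⟩
    simpa only [(hrow _).tsum_eq] using hg.summable
  have htotal : HasSum (fun p : ι × κ ↦ f p.1 p.2) s := by
    rw [← (hsummable.hasSum.prod_fiberwise hrow).unique hg]
    exact hsummable.hasSum
  exact ((Equiv.prodComm κ ι).hasSum_iff.mpr htotal).prod_fiberwise fun j ↦
    (hsummable.prod_symm.prod_factor j).hasSum

lemma hasSum_zetaNat_div_mul_pow (hx : |x| < 1) :
    HasSum (fun n : ℕ ↦ zetaNat (2 * (n + 1)) / ((n : ℝ) + 1) * x ^ (2 * (n + 1)))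
      (-log (sinc (π * x))) := by
  have hrow (k : ℕ) : HasSum (fun n : ℕ ↦ (x ^ 2 / ((k : ℝ) + 1) ^ 2) ^ (n + 1) / ((n : ℝ) + 1))
      (-log (1 - x ^ 2 / ((k : ℝ) + 1) ^ 2)) :=
    hasSum_pow_div_log_of_abs_lt_one <| by
      rw [abs_of_nonneg (by positivity)]
      exact sq_div_add_one_sq_lt_one hx k
  refine (hasSum_tsum_comm_of_nonneg (fun k n ↦ by positivity) hrow
    (hasSum_neg_log_one_sub_sq_div hx)).congr_fun fun n ↦ ?_
  rw [zetaNat, div_mul_eq_mul_div, ← tsum_mul_right, ← tsum_div_const]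
  refine tsum_congr fun k ↦ ?_
  rw [div_pow, ← pow_mul, ← pow_mul, one_div_mul_eq_div]

lemma ae_sin_ne_zero : ∀ᵐ t : ℝ, sin t ≠ 0 := by
  filter_upwards [(Set.countable_range fun n : ℤ ↦ (n : ℝ) * π).ae_notMem volume] with t ht
  exact sin_ne_zero_iff.mpr fun n hn ↦ ht ⟨n, hn⟩

lemma log_sin_eq_log_add_log_sinc (ht : sin t ≠ 0) : log (sin t) = log t + log (sinc t) := by
  have ht₀ : t ≠ 0 := by rintro rfl; exact ht sin_zero
  rw [sinc_of_ne_zero ht₀, log_div ht ht₀, add_sub_cancel]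

lemma intervalIntegrable_log_sinc :
    IntervalIntegrable (fun t ↦ log (sinc t)) volume a b := by
  refine (intervalIntegrable_log_sin.sub intervalIntegral.intervalIntegrable_log').congr_ae
    (ae_restrict_of_ae ?_)
  filter_upwards [ae_sin_ne_zero] with t ht
  exact sub_eq_of_eq_add' (log_sin_eq_log_add_log_sinc ht)

lemma hasSum_integral_neg_log_sinc (ha : |a| ≤ π) :
    HasSum (fun n : ℕ ↦ zetaNat (2 * (n + 1)) / (((n : ℝ) + 1) * (2 * n + 3)) *
      (a / π) ^ (2 * (n + 1)) * a) (∫ t in (0)..a, -log (sinc t)) := by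
  set F : ℕ → ℝ → ℝ := fun n t ↦ zetaNat (2 * (n + 1)) / ((n : ℝ) + 1) * (t / π) ^ (2 * (n + 1))
  have hF_nonneg (n : ℕ) (t : ℝ) : 0 ≤ F n t := by
    have : 0 ≤ zetaNat (2 * (n + 1)) := tsum_nonneg fun k ↦ by positivity
    have : 0 ≤ (t / π) ^ (2 * (n + 1)) := (even_two_mul _).pow_nonneg _
    positivity
  have hF_sum : ∀ᵐ t : ℝ, t ∈ Set.uIoc 0 a → HasSum (F · t) (-log (sinc t)) := by
    filter_upwards [volume.ae_ne π, volume.ae_ne (-π)] with t hπ hπ' ht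
    have hta : |t| ≤ |a| := by
      simpa using Set.abs_sub_left_of_mem_uIcc (Set.uIoc_subset_uIcc ht)
    have htπ : |t| < π := (hta.trans ha).lt_of_ne fun h ↦ (eq_or_eq_neg_of_abs_eq h).elim hπ hπ'
    have htπ' : |t / π| < 1 := by rwa [abs_div, abs_of_pos pi_pos, div_lt_one pi_pos]
    simpa only [mul_div_cancel₀ t pi_ne_zero] using hasSum_zetaNat_div_mul_pow htπ'
  have hF_integral (n : ℕ) : ∫ t in (0)..a, F n t =
      zetaNat (2 * (n + 1)) / (((n : ℝ) + 1) * (2 * n + 3)) * (a / π) ^ (2 * (n + 1)) * a := by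
    simp only [F, div_pow, intervalIntegral.integral_const_mul, intervalIntegral.integral_div,
      integral_pow]
    push_cast
    field_simp
    ring
  simp_rw [← hF_integral]
  -- The terms are nonnegative, so the series dominates itself.
  refine intervalIntegral.hasSum_integral_of_dominated_convergence F
    (fun n ↦ by fun_prop) (fun n ↦ ae_of_all _ fun t _ ↦ ?_) ?_ ?_ hF_sum
  · rw [norm_of_nonneg (hF_nonneg n t)]
  · filter_upwards [hF_sum] with t h ht using (h ht).summable
  · refine intervalIntegrable_log_sinc.neg.congr_ae ?_
    rw [EventuallyEq, ae_restrict_iff' measurableSet_uIoc]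
    filter_upwards [hF_sum] with t h ht using (h ht).tsum_eq.symm

end LogSinc

section PoissonKernel

variable {r t : ℝ}

lemma norm_one_sub_mul_exp_sq (r t : ℝ) :
    ‖1 - r * Complex.exp (t * Complex.I)‖ ^ 2 = 1 - 2 * r * cos t + r ^ 2 := by
  rw [Complex.sq_norm, Complex.normSq_apply]
  simp only [Complex.sub_re, Complex.sub_im, Complex.one_re, Complex.one_im, Complex.re_ofReal_mul,
    Complex.im_ofReal_mul, Complex.exp_ofReal_mul_I_re, Complex.exp_ofReal_mul_I_im]
  linear_combination r ^ 2 * sin_sq_add_cos_sq t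

lemma hasSum_pow_mul_cos_div (hr : |r| < 1) (t : ℝ) :
    HasSum (fun k : ℕ ↦ r ^ (k + 1) * cos ((k + 1) * t) / ((k : ℝ) + 1))
      (-(log (1 - 2 * r * cos t + r ^ 2) / 2)) := by
  have hz : ‖r * Complex.exp (t * Complex.I)‖ < 1 := by simpa using hr
  have hre := Complex.hasSum_re <|
    (hasSum_nat_add_iff' 1).mpr (Complex.hasSum_taylorSeries_neg_log hz)
  convert! hre using 1
  · ext k
    have hpow : (r * Complex.exp (t * Complex.I)) ^ (k + 1) / ((k + 1 : ℕ) : ℂ) =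
        ((r ^ (k + 1) / (k + 1) : ℝ) : ℂ) * Complex.exp (((k + 1) * t : ℝ) * Complex.I) := by
      rw [mul_pow, ← Complex.exp_nat_mul]
      push_cast
      ring_nf
    rw [hpow, Complex.re_ofReal_mul, Complex.exp_ofReal_mul_I_re]
    ring
  · rw [← norm_one_sub_mul_exp_sq, log_pow]
    simp [Complex.log_re]

lemma hasSum_pow_mul_sin_div_sq (hr : |r| < 1) (θ : ℝ) :
    HasSum (fun k : ℕ ↦ r ^ (k + 1) * (sin ((k + 1) * θ) / ((k : ℝ) + 1) ^ 2))
      (∫ t in (0)..θ, -(log (1 - 2 * r * cos t + r ^ 2) / 2)) := by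
  have hterm (k : ℕ) : ∫ t in (0)..θ, r ^ (k + 1) * cos ((k + 1) * t) / ((k : ℝ) + 1) =
      r ^ (k + 1) * (sin ((k + 1) * θ) / ((k : ℝ) + 1) ^ 2) := by
    have hk : (k : ℝ) + 1 ≠ 0 := by positivity
    rw [intervalIntegral.integral_div, intervalIntegral.integral_const_mul,
      intervalIntegral.integral_comp_mul_left cos hk, integral_cos, mul_zero, sin_zero, sub_zero,
      smul_eq_mul]
    field_simp
  have hgeometric : Summable fun k : ℕ ↦ |r| ^ (k + 1) :=
    (summable_nat_add_iff 1).mpr (summable_geometric_of_abs_lt_one (by rwa [abs_abs]))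
  simp_rw [← hterm]
  refine intervalIntegral.hasSum_integral_of_dominated_convergence (fun k _ ↦ |r| ^ (k + 1))
    (fun k ↦ by fun_prop) (fun k ↦ ae_of_all _ fun t _ ↦ ?_) (ae_of_all _ fun _ _ ↦ hgeometric)
    intervalIntegrable_const (ae_of_all _ fun t _ ↦ hasSum_pow_mul_cos_div hr t)
  rw [norm_div, norm_mul, norm_pow, norm_of_nonneg (by positivity : 0 ≤ (k : ℝ) + 1), norm_eq_abs,
    norm_eq_abs]
  calc |r| ^ (k + 1) * |cos ((k + 1) * t)| / (k + 1)
      ≤ |r| ^ (k + 1) * |cos ((k + 1) * t)| := div_le_self (by positivity) (by simp)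
    _ ≤ |r| ^ (k + 1) := mul_le_of_le_one_right (by positivity) (abs_cos_le_one _)

lemma sin_sq_le_one_sub_two_mul_cos_add_sq (r t : ℝ) :
    sin t ^ 2 ≤ 1 - 2 * r * cos t + r ^ 2 := by
  linarith [sq_nonneg (r - cos t), sin_sq_add_cos_sq t]

lemma abs_log_one_sub_two_mul_cos_add_sq_div_two_le (hr : |r| ≤ 1) (ht : sin t ≠ 0) :
    |log (1 - 2 * r * cos t + r ^ 2) / 2| ≤ log 2 + |log (sin t)| := by
  have hlower : 2 * log (sin t) ≤ log (1 - 2 * r * cos t + r ^ 2) := by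
    simpa only [log_pow, Nat.cast_ofNat] using
      log_le_log (by positivity) (sin_sq_le_one_sub_two_mul_cos_add_sq r t)
  have hupper : log (1 - 2 * r * cos t + r ^ 2) ≤ 2 * log 2 := by
    have hpos : 0 < 1 - 2 * r * cos t + r ^ 2 :=
      (sq_pos_of_ne_zero ht).trans_le (sin_sq_le_one_sub_two_mul_cos_add_sq r t)
    have hle : 1 - 2 * r * cos t + r ^ 2 ≤ 2 ^ 2 := by
      rw [← norm_one_sub_mul_exp_sq]
      gcongr
      calc ‖1 - r * Complex.exp (t * Complex.I)‖
          ≤ ‖(1 : ℂ)‖ + ‖r * Complex.exp (t * Complex.I)‖ := norm_sub_le _ _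
        _ = 1 + |r| := by simp
        _ ≤ 2 := by linarith
    simpa only [log_pow, Nat.cast_ofNat] using log_le_log hpos hle
  rw [abs_le]
  constructor <;>
    linarith [neg_abs_le (log (sin t)), abs_nonneg (log (sin t)), log_pos (one_lt_two (α := ℝ))]

lemma log_two_sub_two_mul_cos_div_two (t : ℝ) :
    log (2 - 2 * cos t) / 2 = log |2 * sin (t / 2)| := by
  have hsq : 2 - 2 * cos t = (2 * sin (t / 2)) ^ 2 := by
    rw [mul_pow, sin_sq_eq_half_sub, mul_div_cancel₀ t two_ne_zero]
    ring
  rw [hsq, log_pow, log_abs, Nat.cast_ofNat, mul_div_cancel_left₀ _ two_ne_zero]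

lemma tendsto_integral_log_one_sub_two_mul_cos_add_sq (θ : ℝ) :
    Tendsto (fun r : ℝ ↦ ∫ t in (0)..θ, -(log (1 - 2 * r * cos t + r ^ 2) / 2)) (𝓝[<] 1)
      (𝓝 (∫ t in (0)..θ, -log |2 * sin (t / 2)|)) := by
  have hr_abs : ∀ᶠ r : ℝ in 𝓝[<] 1, |r| ≤ 1 := by
    filter_upwards [Ioo_mem_nhdsLT (show (-1 : ℝ) < 1 by norm_num)] with r hr
    exact abs_le.mpr ⟨hr.1.le, hr.2.le⟩
  refine intervalIntegral.tendsto_integral_filter_of_dominated_convergence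
    (fun t ↦ log 2 + |log (sin t)|) (Eventually.of_forall fun r ↦ ?_) ?_
    (intervalIntegrable_const.add intervalIntegrable_log_sin.abs) ?_
  · exact Measurable.aestronglyMeasurable (by fun_prop)
  · filter_upwards [hr_abs] with r hr
    filter_upwards [ae_sin_ne_zero] with t ht _
    rw [norm_neg, norm_eq_abs]
    exact abs_log_one_sub_two_mul_cos_add_sq_div_two_le hr ht
  · filter_upwards [ae_sin_ne_zero] with t ht _
    have hpos : 0 < 1 - 2 * 1 * cos t + 1 ^ 2 :=
      (sq_pos_of_ne_zero ht).trans_le (sin_sq_le_one_sub_two_mul_cos_add_sq 1 t)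
    have hcont : ContinuousAt (fun r : ℝ ↦ -(log (1 - 2 * r * cos t + r ^ 2) / 2)) 1 := by
      fun_prop (disch := exact hpos.ne')
    have hvalue : -log |2 * sin (t / 2)| = -(log (1 - 2 * 1 * cos t + 1 ^ 2) / 2) := by
      rw [← log_two_sub_two_mul_cos_div_two]
      ring_nf
    rw [hvalue]
    exact hcont.tendsto.mono_left nhdsWithin_le_nhds

end PoissonKernel

section Clausen

variable {θ : ℝ}

lemma hasSum_clausen (θ : ℝ) :
    HasSum (fun k : ℕ ↦ sin ((k + 1) * θ) / ((k : ℝ) + 1) ^ 2) (clausen θ) := by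
  have hbound : Summable fun k : ℕ ↦ 1 / ((k : ℝ) + 1) ^ 2 := by
    exact_mod_cast (summable_nat_add_iff 1).mpr (summable_one_div_nat_pow.mpr one_lt_two)
  refine (Summable.of_norm_bounded hbound fun k ↦ ?_).hasSum
  rw [norm_div, norm_of_nonneg (by positivity : 0 ≤ ((k : ℝ) + 1) ^ 2)]
  gcongr
  exact abs_sin_le_one _

lemma tendsto_tsum_pow_mul_sin_div_sq (θ : ℝ) :
    Tendsto (fun r : ℝ ↦ ∑' k : ℕ, r ^ (k + 1) * (sin ((k + 1) * θ) / ((k : ℝ) + 1) ^ 2)) (𝓝[<] 1)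
      (𝓝 (clausen θ)) := by
  have habel := tendsto_tsum_powerSeries_nhdsWithin_lt (hasSum_clausen θ).tendsto_sum_nat
  have hid : Tendsto (fun r : ℝ ↦ r) (𝓝[<] 1) (𝓝 1) := tendsto_id.mono_left nhdsWithin_le_nhds
  rw [← one_mul (clausen θ)]
  refine (hid.mul habel).congr fun r ↦ ?_
  rw [← tsum_mul_left]
  exact tsum_congr fun k ↦ by ring

theorem clausen_eq_integral (θ : ℝ) : clausen θ = ∫ t in (0)..θ, -log |2 * sin (t / 2)| := by
  refine tendsto_nhds_unique_of_eventuallyEq (tendsto_tsum_pow_mul_sin_div_sq θ)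
    (tendsto_integral_log_one_sub_two_mul_cos_add_sq θ) ?_
  filter_upwards [Ioo_mem_nhdsLT (show (-1 : ℝ) < 1 by norm_num)] with r hr
  exact (hasSum_pow_mul_sin_div_sq (abs_lt.mpr hr) θ).tsum_eq

theorem clausen_eq_sub_add_integral_log_sinc (hθ : θ ≠ 0) :
    clausen θ = θ - θ * log |θ| + 2 * ∫ t in (0)..θ / 2, -log (sinc t) := by
  have hsplit : ∀ᵐ t : ℝ, t ∈ Set.uIoc 0 (θ / 2) →
      -log |2 * sin t| = -(log 2 + log t) + -log (sinc t) := by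
    filter_upwards [ae_sin_ne_zero] with t ht _
    rw [log_abs, log_mul two_ne_zero ht, log_sin_eq_log_add_log_sinc ht]
    ring
  have hlog : IntervalIntegrable log volume 0 (θ / 2) := intervalIntegral.intervalIntegrable_log'
  have hregular : IntervalIntegrable (fun t ↦ -log (sinc t)) volume 0 (θ / 2) :=
    intervalIntegrable_log_sinc.neg
  have hsingular : IntervalIntegrable (fun t ↦ -(log 2 + log t)) volume 0 (θ / 2) :=
    (intervalIntegrable_const.add hlog).neg
  calc clausen θ = 2 * ∫ t in (0)..θ / 2, -log |2 * sin t| := by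
        rw [clausen_eq_integral, intervalIntegral.integral_comp_div (fun t ↦ -log |2 * sin t|)
          two_ne_zero, zero_div, smul_eq_mul]
    _ = 2 * ((∫ t in (0)..θ / 2, -(log 2 + log t)) + ∫ t in (0)..θ / 2, -log (sinc t)) := by
        rw [intervalIntegral.integral_congr_ae hsplit, intervalIntegral.integral_add
          hsingular hregular]
    _ = θ - θ * log |θ| + 2 * ∫ t in (0)..θ / 2, -log (sinc t) := by
        rw [intervalIntegral.integral_neg, intervalIntegral.integral_add intervalIntegrable_const
          hlog, intervalIntegral.integral_const, integral_log, log_div hθ two_ne_zero, log_abs,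
          smul_eq_mul]
        ring

end Clausen

theorem stmt19_general {θ : ℝ} (hθ : θ ≠ 0) (hθ' : |θ| ≤ 2 * π) :
    clausen θ / θ = 1 - log |θ| +
      ∑' n : ℕ, zetaNat (2 * (n + 1)) / (((n : ℝ) + 1) * (2 * n + 3)) *
        (θ / (2 * π)) ^ (2 * (n + 1)) := by
  have hhalf : |θ / 2| ≤ π := by
    rw [abs_div, abs_two]
    linarith
  rw [clausen_eq_sub_add_integral_log_sinc hθ, ← (hasSum_integral_neg_log_sinc hhalf).tsum_eq,
    tsum_mul_right, div_div]
  field_simp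

theorem stmt19 (θ : ℝ) (h1 : 0 < θ) (h2 : θ < 2 * π) :
    (∑' k : ℕ, Real.sin (((k : ℝ) + 1) * θ) / ((k : ℝ) + 1) ^ 2) / θ =
      1 - Real.log θ +
        ∑' n : ℕ, (∑' k : ℕ, 1 / ((k : ℝ) + 1) ^ (2 * (n + 1))) /
          (((n : ℝ) + 1) * (2 * (n : ℝ) + 3)) * (θ / (2 * π)) ^ (2 * (n + 1)) := by
  simpa only [clausen, zetaNat, abs_of_pos h1] using
    stmt19_general h1.ne' ((abs_of_pos h1).trans_le h2.le)
end
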